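/- One-step potential monotonicity of wide-range Hedge: let w : ℐ → [0,∞) be arbitrary nonnegative weights, S_b ∈ [0,1] for each b ∈ B^s ∪ B^e, ℓ : 𝒜 → [0,∞) a loss vector, η > 0, and p ∈ Δ(𝒜) a probability vector satisfying the stationarity equation ∑_{(b,ψ)∈ℐ} w(b,ψ)·S_b·p = ∑_{(b,ψ)∈ℐ} w(b,ψ)·S_b·(ψ∘p) (as an equality of vectors in ℝ^A). Then ∑_{(b,ψ)∈ℐ} w(b,ψ)·exp(η·S_b·(exp(−η‖ℓ‖_∞)·⟨p,ℓ⟩ − ⟨ψ∘p,ℓ⟩)) ≤ ∑_{(b,ψ)∈ℐ} w(b,ψ). -/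

import Mathlib

/-!
Measure losses in units of `M = ‖ℓ‖_∞`: put `c = ⟨p, ℓ⟩ / M`, `d = ⟨ψ∘p, ℓ⟩ / M` and `y = η M`. The
convex function `x ↦ exp (x z)` lies below its chord `1 + x (exp z - 1)` on `[0, 1]`. Taking
`x = c exp (-y)`, `z = y` and then `x = d`, `z = -y` produces the same slope `1 - exp (-y)` for `c`
and, with opposite sign, for `d`; this is the reason for the factor `exp (-η ‖ℓ‖_∞)`. In the product
of the two bounds the second-order term is nonpositive, so
`exp (y (exp (-y) c - d)) ≤ 1 + (1 - exp (-y)) (c - d)`. One more chord bound pulls out `S_b`, and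
the resulting linear terms cancel in the weighted sum by stationarity.
-/

open Finset

/-- Pushforward of a vector `p` on `Fin A` under a map `ψ : Fin A → Fin A`:
`(ψ∘p)(a) = ∑_{a' : ψ(a') = a} p(a')`. -/
def pushf {A : ℕ} (ψ : Fin A → Fin A) (p : Fin A → ℝ) : Fin A → ℝ :=
  fun a => ∑ a' ∈ Finset.univ.filter (fun a' => ψ a' = a), p a'

/-- Standard inner product on `ℝ^A`. -/
def ip {A : ℕ} (p ℓ : Fin A → ℝ) : ℝ := ∑ a, p a * ℓ a

/-- Sup norm `‖ℓ‖_∞ = max_a ℓ(a)` (for nonempty `Fin A`). -/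
noncomputable def supNorm {A : ℕ} (ℓ : Fin A → ℝ) : ℝ := sSup (Set.range ℓ)

/-- The set `Ψ^e` of external (constant) modifications on `Fin A`. -/
def PsiE (A : ℕ) : Finset (Fin A → Fin A) :=
  Finset.univ.image fun a => Function.const (Fin A) a

lemma exp_mul_le_one_add_mul {x : ℝ} (hx : x ∈ Set.Icc (0 : ℝ) 1) (y : ℝ) :
    Real.exp (x * y) ≤ 1 + x * (Real.exp y - 1) := by
  have h := convexOn_exp.2 (Set.mem_univ y) (Set.mem_univ 0) hx.1 (sub_nonneg.2 hx.2)
    (add_sub_cancel x 1)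
  simp only [smul_eq_mul, mul_zero, add_zero, Real.exp_zero] at h
  linarith

lemma exp_mul_exp_neg_mul_le {c y : ℝ} (hc : c ∈ Set.Icc (0 : ℝ) 1) (hy : 0 ≤ y) :
    Real.exp (c * Real.exp (-y) * y) ≤ 1 + c * (1 - Real.exp (-y)) := by
  have hmem : c * Real.exp (-y) ∈ Set.Icc (0 : ℝ) 1 :=
    unitInterval.mul_mem hc ⟨(Real.exp_pos _).le, Real.exp_le_one_iff.2 (neg_nonpos.2 hy)⟩
  have hinv : Real.exp (-y) * Real.exp y = 1 := by
    rw [← Real.exp_add, neg_add_cancel, Real.exp_zero]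
  calc Real.exp (c * Real.exp (-y) * y)
      ≤ 1 + c * Real.exp (-y) * (Real.exp y - 1) := exp_mul_le_one_add_mul hmem y
    _ = 1 + c * (1 - Real.exp (-y)) := by linear_combination c * hinv

lemma exp_mul_exp_neg_mul_sub_le {c d y : ℝ} (hc : c ∈ Set.Icc (0 : ℝ) 1)
    (hd : d ∈ Set.Icc (0 : ℝ) 1) (hy : 0 ≤ y) :
    Real.exp (y * (Real.exp (-y) * c - d)) ≤ 1 + (1 - Real.exp (-y)) * (c - d) := by
  set k := 1 - Real.exp (-y)
  have hk0 : 0 ≤ k := sub_nonneg.2 (Real.exp_le_one_iff.2 (neg_nonpos.2 hy))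
  have hgain : Real.exp (c * Real.exp (-y) * y) ≤ 1 + c * k := exp_mul_exp_neg_mul_le hc hy
  have hloss : Real.exp (d * -y) ≤ 1 - d * k := by
    linarith [exp_mul_le_one_add_mul hd (-y)]
  calc Real.exp (y * (Real.exp (-y) * c - d))
      = Real.exp (c * Real.exp (-y) * y) * Real.exp (d * -y) := by
        rw [← Real.exp_add]
        ring_nf
    _ ≤ (1 + c * k) * (1 - d * k) :=
        mul_le_mul hgain hloss (Real.exp_pos _).le (add_nonneg zero_le_one (mul_nonneg hc.1 hk0))
    _ = 1 + k * (c - d) - c * d * k ^ 2 := by ring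
    _ ≤ 1 + k * (c - d) := sub_le_self _ (mul_nonneg (mul_nonneg hc.1 hd.1) (sq_nonneg k))

lemma sum_mul_exp_le_sum_of_sum_mul_eq {ι : Type*} {I : Finset ι} {w S c d : ι → ℝ} {y : ℝ}
    (hw : ∀ i ∈ I, 0 ≤ w i) (hS : ∀ i ∈ I, S i ∈ Set.Icc (0 : ℝ) 1)
    (hc : ∀ i ∈ I, c i ∈ Set.Icc (0 : ℝ) 1) (hd : ∀ i ∈ I, d i ∈ Set.Icc (0 : ℝ) 1) (hy : 0 ≤ y)
    (hcd : ∑ i ∈ I, w i * S i * c i = ∑ i ∈ I, w i * S i * d i) :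
    ∑ i ∈ I, w i * Real.exp (S i * (y * (Real.exp (-y) * c i - d i))) ≤ ∑ i ∈ I, w i := by
  set k := 1 - Real.exp (-y)
  have hterm : ∀ i ∈ I, Real.exp (S i * (y * (Real.exp (-y) * c i - d i)))
      ≤ 1 + S i * (k * (c i - d i)) := fun i hi =>
    (exp_mul_le_one_add_mul (hS i hi) _).trans <| by
      gcongr
      · exact (hS i hi).1
      · exact sub_le_iff_le_add'.2 (exp_mul_exp_neg_mul_sub_le (hc i hi) (hd i hi) hy)
  calc ∑ i ∈ I, w i * Real.exp (S i * (y * (Real.exp (-y) * c i - d i)))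
      ≤ ∑ i ∈ I, w i * (1 + S i * (k * (c i - d i))) :=
        sum_le_sum fun i hi => mul_le_mul_of_nonneg_left (hterm i hi) (hw i hi)
    _ = ∑ i ∈ I, w i + k * (∑ i ∈ I, w i * S i * c i - ∑ i ∈ I, w i * S i * d i) := by
        rw [← sum_sub_distrib, mul_sum, ← sum_add_distrib]
        exact sum_congr rfl fun i _ => by ring
    _ = ∑ i ∈ I, w i := by rw [hcd, sub_self, mul_zero, add_zero]

-- At `M = 0` the junk value `x / M = 0` is the right one, since then `x = 0`.
lemma div_mul_cancel_of_mem_Icc_zero {𝕜 : Type*} [GroupWithZero 𝕜] [PartialOrder 𝕜] {x M : 𝕜}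
    (hx : x ∈ Set.Icc 0 M) : x / M * M = x :=
  div_mul_cancel_of_imp fun hM => le_antisymm (hx.2.trans_eq hM) hx.1

lemma dotProduct_mem_Icc_of_mem_stdSimplex {𝕜 α : Type*} [Field 𝕜] [LinearOrder 𝕜]
    [IsStrictOrderedRing 𝕜] [Fintype α] {p ℓ : α → 𝕜} {m M : 𝕜} (hp : p ∈ stdSimplex 𝕜 α)
    (hℓ : ∀ a, ℓ a ∈ Set.Icc m M) : p ⬝ᵥ ℓ ∈ Set.Icc m M :=
  (convex_Icc m M).sum_mem (fun a _ => hp.1 a) hp.2 fun a _ => hℓ a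

lemma pushf_mem_stdSimplex {A : ℕ} (ψ : Fin A → Fin A) {p : Fin A → ℝ}
    (hp : p ∈ stdSimplex ℝ (Fin A)) : pushf ψ p ∈ stdSimplex ℝ (Fin A) :=
  ⟨fun _ => sum_nonneg fun a' _ => hp.1 a', (sum_fiberwise univ ψ p).trans hp.2⟩

lemma le_supNorm {A : ℕ} (ℓ : Fin A → ℝ) (a : Fin A) : ℓ a ≤ supNorm ℓ :=
  le_csSup (Set.finite_range ℓ).bddAbove (Set.mem_range_self a)

theorem stmt2_general {α ι : Type*} [Fintype α] {I : Finset ι} {w S : ι → ℝ}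
    (hw : ∀ i ∈ I, 0 ≤ w i) (hS : ∀ i ∈ I, S i ∈ Set.Icc (0 : ℝ) 1)
    {ℓ : α → ℝ} {M η : ℝ} (hℓ : ∀ a, ℓ a ∈ Set.Icc 0 M) (hη : 0 ≤ η)
    {p : α → ℝ} (hp : p ∈ stdSimplex ℝ α)
    {q : ι → α → ℝ} (hq : ∀ i ∈ I, q i ∈ stdSimplex ℝ α)
    (hstat : ∑ i ∈ I, (w i * S i) • p = ∑ i ∈ I, (w i * S i) • q i) :
    ∑ i ∈ I, w i * Real.exp (η * S i * (Real.exp (-η * M) * (p ⬝ᵥ ℓ) - q i ⬝ᵥ ℓ))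
      ≤ ∑ i ∈ I, w i := by
  have hL : p ⬝ᵥ ℓ ∈ Set.Icc 0 M := dotProduct_mem_Icc_of_mem_stdSimplex hp hℓ
  have hqL : ∀ i ∈ I, q i ⬝ᵥ ℓ ∈ Set.Icc 0 M := fun i hi =>
    dotProduct_mem_Icc_of_mem_stdSimplex (hq i hi) hℓ
  have hM : 0 ≤ M := hL.1.trans hL.2
  have hbalance : ∑ i ∈ I, w i * S i * (p ⬝ᵥ ℓ / M) = ∑ i ∈ I, w i * S i * (q i ⬝ᵥ ℓ / M) := by
    have h := congrArg (· ⬝ᵥ ℓ / M) hstat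
    simpa only [sum_dotProduct, smul_dotProduct, smul_eq_mul, sum_div, mul_div_assoc] using h
  have hexponent : ∀ i ∈ I, η * S i * (Real.exp (-η * M) * (p ⬝ᵥ ℓ) - q i ⬝ᵥ ℓ)
      = S i * (η * M * (Real.exp (-(η * M)) * (p ⬝ᵥ ℓ / M) - q i ⬝ᵥ ℓ / M)) := fun i hi => by
    rw [neg_mul]
    linear_combination (-(η * S i * Real.exp (-(η * M)))) * div_mul_cancel_of_mem_Icc_zero hL
      + η * S i * div_mul_cancel_of_mem_Icc_zero (hqL i hi)
  calc ∑ i ∈ I, w i * Real.exp (η * S i * (Real.exp (-η * M) * (p ⬝ᵥ ℓ) - q i ⬝ᵥ ℓ))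
      = ∑ i ∈ I, w i *
          Real.exp (S i * (η * M * (Real.exp (-(η * M)) * (p ⬝ᵥ ℓ / M) - q i ⬝ᵥ ℓ / M))) :=
        sum_congr rfl fun i hi => by rw [hexponent i hi]
    _ ≤ ∑ i ∈ I, w i :=
        sum_mul_exp_le_sum_of_sum_mul_eq hw hS (fun _ _ => unitInterval.div_mem hL.1 hM hL.2)
          (fun i hi => unitInterval.div_mem (hqL i hi).1 hM (hqL i hi).2) (mul_nonneg hη hM)
          hbalance

/-- One-step potential monotonicity of wide-range Hedge: if the probability vector `p`
satisfies the stationarity equation, then the exponential potential does not increase. -/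
theorem stmt2
    (A : ℕ) (hA : 1 ≤ A)
    (B : Type) [Fintype B] [DecidableEq B]
    (Bs Be : Finset B) (hdisj : Disjoint Bs Be)
    (hBs : Bs.Nonempty) (hBe : Be.Nonempty)
    (ℐ : Finset (B × (Fin A → Fin A)))
    (hℐ : ℐ = Bs ×ˢ (Finset.univ : Finset (Fin A → Fin A)) ∪ Be ×ˢ PsiE A)
    (w : B × (Fin A → Fin A) → ℝ) (hw : ∀ bψ ∈ ℐ, 0 ≤ w bψ)
    (S : B → ℝ) (hS : ∀ b ∈ Bs ∪ Be, 0 ≤ S b ∧ S b ≤ 1)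
    (ℓ : Fin A → ℝ) (hℓ : ∀ a, 0 ≤ ℓ a)
    (η : ℝ) (hη : 0 < η)
    (p : Fin A → ℝ) (hp : (∀ a, 0 ≤ p a) ∧ ∑ a, p a = 1)
    (hstat : ∀ a : Fin A,
      ∑ bψ ∈ ℐ, w bψ * S bψ.1 * p a = ∑ bψ ∈ ℐ, w bψ * S bψ.1 * pushf bψ.2 p a) :
    ∑ bψ ∈ ℐ, w bψ *
        Real.exp (η * S bψ.1 * (Real.exp (-η * supNorm ℓ) * ip p ℓ - ip (pushf bψ.2 p) ℓ))
      ≤ ∑ bψ ∈ ℐ, w bψ := by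
  have hSI : ∀ bψ ∈ ℐ, S bψ.1 ∈ Set.Icc (0 : ℝ) 1 := by grind
  exact stmt2_general hw hSI (fun a => ⟨hℓ a, le_supNorm ℓ a⟩) hη.le hp
    (fun bψ _ => pushf_mem_stdSimplex bψ.2 hp)
    (funext fun a => by simpa only [Finset.sum_apply, Pi.smul_apply, smul_eq_mul] using hstat a)
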